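/- Assume A has complex eigenvalues λ_1, …, λ_k, all nonzero, such that for every i = 1, …, k there is a positive integer l_i with λ_i^{l_i} a positive integer ≥ 2, and assume the support of μ is not parallel to a proper subspace of ℚ^k invariant under A. Then there exist a constant c > 0 and a function ε : ℕ → ℝ with ε(p) → 0 as p → ∞, such that for every positive integer p with gcd(det(A), p) = 1 and gcd(det(B), p) = 1, and every n ≥ c·ln p·ln ln p, one has ‖P_n − U‖ ≤ ε(p). -/

import Mathlib

open scoped BigOperators
open Matrix

noncomputable section

/-- Distribution of the un-reduced chain `X₀ = 0`, `X_{n+1} = A·X_n + B_n` on `ℤ^k`,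
where the `B_n` are i.i.d. with common distribution `μ`. -/
def chainDist {k : ℕ} (A : Matrix (Fin k) (Fin k) ℤ) (μ : (Fin k → ℤ) → ℝ) :
    ℕ → (Fin k → ℤ) → ℝ
  | 0 => fun x => if x = 0 then 1 else 0
  | n + 1 => fun x => ∑' y : Fin k → ℤ, chainDist A μ n y * μ (x - A.mulVec y)

/-- `P_n`, the distribution of `X_n = A·X_{n-1} + B_{n-1} (mod p)` on `(ℤ/pℤ)^k`. -/
def chainDistMod {k : ℕ} (A : Matrix (Fin k) (Fin k) ℤ) (μ : (Fin k → ℤ) → ℝ) (p : ℕ)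
    (n : ℕ) (x : Fin k → ZMod p) : ℝ :=
  ∑' y : {y : Fin k → ℤ // (fun i => ((y i : ZMod p))) = x}, chainDist A μ n y.val

/-- The uniform distribution `U` on `(ℤ/pℤ)^k`. -/
def unif (k p : ℕ) : ℝ := ((p : ℝ) ^ k)⁻¹

/-- The variation distance `‖P_n − U‖`. -/
def tvDist {k : ℕ} (A : Matrix (Fin k) (Fin k) ℤ) (μ : (Fin k → ℤ) → ℝ) (p : ℕ)
    (n : ℕ) : ℝ :=
  (1 / 2) * ∑' x : Fin k → ZMod p, |chainDistMod A μ p n x - unif k p|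

/-- `supp μ` is parallel to `v + W` for some proper subspace `W` of `ℚ^k` invariant under
`A`. -/
def ParallelInv {k : ℕ} (A : Matrix (Fin k) (Fin k) ℤ) (μ : (Fin k → ℤ) → ℝ) : Prop :=
  ∃ (W : Submodule ℚ (Fin k → ℚ)) (v : Fin k → ℚ), W ≠ ⊤ ∧
    (∀ w ∈ W, (A.map (Int.cast : ℤ → ℚ)).mulVec w ∈ W) ∧
    ∀ x : Fin k → ℤ, μ x ≠ 0 → (fun i => (x i : ℚ)) - v ∈ W

/-- `V = {h − k : h, k ∈ supp μ}`. -/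
def Vset {k : ℕ} (μ : (Fin k → ℤ) → ℝ) : Set (Fin k → ℤ) :=
  {x | ∃ h g : Fin k → ℤ, μ h ≠ 0 ∧ μ g ≠ 0 ∧ x = h - g}

/-- `d`, the degree of the minimal polynomial of `A` (over `ℚ`). -/
def minpolyDeg {k : ℕ} (A : Matrix (Fin k) (Fin k) ℤ) : ℕ :=
  (minpoly ℚ (A.map (Int.cast : ℤ → ℚ))).natDegree

/-- `V^{d−1} = {A^m x : x ∈ V, m = 0, …, d−1}`. -/
def VdSet {k : ℕ} (A : Matrix (Fin k) (Fin k) ℤ) (μ : (Fin k → ℤ) → ℝ) :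
    Set (Fin k → ℤ) :=
  {y | ∃ x ∈ Vset μ, ∃ m : ℕ, m < minpolyDeg A ∧ y = (A ^ m).mulVec x}

/-- The matrix `B = (y_1 … y_k)` with columns `y_1, …, y_k`. -/
def colMat {k : ℕ} (y : Fin k → (Fin k → ℤ)) : Matrix (Fin k) (Fin k) ℤ :=
  Matrix.of fun i j => y j i

/-!
The Fourier transform of `P_n` at `a` is the product of `μ̂ ((Aᵀ)^j a)` over `j < n`, and by
Plancherel and Cauchy–Schwarz `4 ‖P_n - U‖² ≤ ∑_{a ≠ 0} |P̂_n(a)|²`. All eigenvalues of `A` have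
modulus greater than `1`, so some power `T = (Aᵀ)^N` at least doubles the norm of every integer
vector. Multiplying the representative of `a` in `(-p/2, p/2]^k` by `T` and reducing it again
produces a carry from a fixed finite set `D ∋ 0`, the leading digit of `a / p` to the base `T`, and
`a` is determined by its first `t` digits as soon as `p < 2 ^ t`.

If the leading digit of `det B • a` is not `0`, then `det B • a` is of size comparable to `p`. As
`det B • a` is the image of `Bᵀ a` under the adjugate of `Bᵀ`, some entry `a · A^m (h - g)` of
`Bᵀ a`, with `h` and `g` in the support of `μ`, also stays away from `0` relative to `p`, which
bounds `|P̂_N(a)|²` by a constant `β < 1`.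

Hence `|P̂_{rtN}(a)|²` is at most a product of `r` blocks of `t` factors, each factor being at most
`β` unless the corresponding digit is `0`. The inequality of arithmetic and geometric means replaces
the blocks, which are all translates of the first by powers of the bijection `T`, by the `r`-th
power of the first. Since digit strings of length `t` determine `a`, the sum over `a` is then at
most `(1 + |D| β^r)^t`, which tends to `1` when `t ≈ log₂ p` and `r` is a large multiple of `log t`.
-/

section CodedOrbits

lemma prod_range_mul_eq_prod_prod {M : Type*} [CommMonoid M] (F : ℕ → M) (q N : ℕ) :
    ∏ j ∈ Finset.range (q * N), F j =
      ∏ b ∈ Finset.range q, ∏ j ∈ Finset.range N, F (b * N + j) := by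
  induction q with
  | zero => simp
  | succ q ih => rw [Nat.succ_mul, Finset.prod_range_add, ih, Finset.prod_range_succ]

lemma prod_le_inv_card_mul_sum_pow {κ : Type*} {s : Finset κ} (hs : s.Nonempty) {z : κ → ℝ}
    (hz : ∀ i ∈ s, 0 ≤ z i) :
    ∏ i ∈ s, z i ≤ (s.card : ℝ)⁻¹ * ∑ i ∈ s, z i ^ s.card := by
  have hcard : (s.card : ℝ) ≠ 0 := by exact_mod_cast hs.card_ne_zero
  have amgm := Real.geom_mean_le_arith_mean_weighted s (fun _ => (s.card : ℝ)⁻¹)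
    (fun i => z i ^ s.card) (fun _ _ => by positivity) (by simp [hcard])
    (fun i hi => pow_nonneg (hz i hi) _)
  rw [Finset.mul_sum]
  refine le_of_eq_of_le (Finset.prod_congr rfl fun i hi => ?_) amgm
  rw [Real.pow_rpow_inv_natCast (hz i hi) hs.card_ne_zero]

lemma sum_prod_comp_le_sum_pow {G κ : Type*} [Fintype G] {s : Finset κ} (hs : s.Nonempty)
    {σ : κ → G → G} (hσ : ∀ i ∈ s, Function.Bijective (σ i)) {g : G → ℝ} (hg : ∀ x, 0 ≤ g x) :
    ∑ x, ∏ i ∈ s, g (σ i x) ≤ ∑ x, g x ^ s.card := by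
  have hcard : (s.card : ℝ) ≠ 0 := by exact_mod_cast hs.card_ne_zero
  calc ∑ x, ∏ i ∈ s, g (σ i x)
      ≤ ∑ x, (s.card : ℝ)⁻¹ * ∑ i ∈ s, g (σ i x) ^ s.card :=
        Finset.sum_le_sum fun x _ => prod_le_inv_card_mul_sum_pow hs fun i _ => hg _
    _ = (s.card : ℝ)⁻¹ * ∑ i ∈ s, ∑ x, g (σ i x) ^ s.card := by
        rw [← Finset.mul_sum, Finset.sum_comm]
    _ = (s.card : ℝ)⁻¹ * ∑ _ ∈ s, ∑ x, g x ^ s.card := by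
        congr 1
        exact Finset.sum_congr rfl fun i hi => (hσ i hi).sum_comp fun x => g x ^ s.card
    _ = ∑ x, g x ^ s.card := by
        rw [Finset.sum_const, nsmul_eq_mul, inv_mul_cancel_left₀ hcard]

lemma sum_prod_comp_le_sum_pow_card {G κ S : Type*} [Fintype G] [Fintype κ] {D : Finset S}
    {code : G → κ → S} (hcode : Function.Injective code) (hD : ∀ x i, code x i ∈ D)
    {φ : S → ℝ} (hφ : ∀ s, 0 ≤ φ s) :
    ∑ x, ∏ i, φ (code x i) ≤ (∑ s ∈ D, φ s) ^ Fintype.card κ := by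
  classical
  calc ∑ x, ∏ i, φ (code x i)
      = ∑ c ∈ Finset.univ.image code, ∏ i, φ (c i) :=
        (Finset.sum_image (f := fun c : κ → S => ∏ i, φ (c i)) hcode.injOn).symm
    _ ≤ ∑ c ∈ Fintype.piFinset fun _ => D, ∏ i, φ (c i) := by
        refine Finset.sum_le_sum_of_subset_of_nonneg ?_
          fun c _ _ => Finset.prod_nonneg fun i _ => hφ _
        simpa [Finset.image_subset_iff, Fintype.mem_piFinset] using hD
    _ = (∑ s ∈ D, φ s) ^ Fintype.card κ := by
        rw [← Finset.prod_univ_sum, Finset.prod_const, Finset.card_univ]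

theorem sum_prod_iterate_le {G S : Type*} [Fintype G] {T : G → G} (hT : Function.Bijective T)
    {f : G → ℝ} (hf0 : ∀ x, 0 ≤ f x) (hf1 : ∀ x, f x ≤ 1) {d : G → S} {D : Finset S}
    (hD : ∀ x, d x ∈ D) {s₀ : S} {β : ℝ} (hβ0 : 0 ≤ β) (hβ : ∀ x, d x ≠ s₀ → f x ≤ β)
    {t r : ℕ} (hr : 0 < r) (hinj : Function.Injective fun x (j : Fin t) => d (T^[j] x)) :
    ∑ x, ∏ j ∈ Finset.range (r * t), f (T^[j] x) ≤ (1 + D.card * β ^ r) ^ t := by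
  classical
  let φ : S → ℝ := fun s => if s = s₀ then 1 else β ^ r
  have hφ0 : ∀ s, 0 ≤ φ s := fun s => by unfold φ; split_ifs <;> positivity
  have hfφ : ∀ x, f x ^ r ≤ φ (d x) := fun x => by
    unfold φ
    split_ifs with h
    · exact pow_le_one₀ (hf0 x) (hf1 x)
    · exact pow_le_pow_left₀ (hf0 x) (hβ x h) r
  have hφD : ∑ s ∈ D, φ s ≤ 1 + D.card * β ^ r :=
    calc ∑ s ∈ D, φ s ≤ ∑ s ∈ D, ((if s = s₀ then 1 else 0) + β ^ r) :=
          Finset.sum_le_sum fun s _ => by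
            unfold φ; split_ifs <;> linarith [pow_nonneg hβ0 r]
      _ = (if s₀ ∈ D then 1 else 0) + D.card * β ^ r := by
          rw [Finset.sum_add_distrib, Finset.sum_ite_eq', Finset.sum_const, nsmul_eq_mul]
      _ ≤ 1 + D.card * β ^ r := by gcongr; split_ifs <;> norm_num
  calc ∑ x, ∏ j ∈ Finset.range (r * t), f (T^[j] x)
      = ∑ x, ∏ b ∈ Finset.range r, ∏ j ∈ Finset.range t, f (T^[j] (T^[b * t] x)) := by
        simp only [prod_range_mul_eq_prod_prod, ← Function.iterate_add_apply, add_comm]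
    _ ≤ ∑ x, (∏ j ∈ Finset.range t, f (T^[j] x)) ^ r := by
        simpa using sum_prod_comp_le_sum_pow (Finset.nonempty_range_iff.2 hr.ne')
          (σ := fun b => T^[b * t]) (fun b _ => hT.iterate _)
          (g := fun x => ∏ j ∈ Finset.range t, f (T^[j] x))
          fun x => Finset.prod_nonneg fun j _ => hf0 _
    _ ≤ ∑ x, ∏ j : Fin t, φ (d (T^[j] x)) := by
        refine Finset.sum_le_sum fun x _ => ?_
        rw [← Finset.prod_pow, Finset.prod_range]
        exact Finset.prod_le_prod (fun j _ => pow_nonneg (hf0 _) r) fun j _ => hfφ _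
    _ ≤ (∑ s ∈ D, φ s) ^ t := by
        simpa using sum_prod_comp_le_sum_pow_card hinj (fun x j => hD _) hφ0
    _ ≤ (1 + D.card * β ^ r) ^ t :=
        pow_le_pow_left₀ (Finset.sum_nonneg fun s _ => hφ0 s) hφD t

end CodedOrbits

section Reduction

variable {ι : Type*}

/-- Coordinatewise reduction `ℤ^ι → (ℤ/pℤ)^ι`. -/
def redMod (p : ℕ) : (ι → ℤ) →+ (ι → ZMod p) := (Int.castAddHom (ZMod p)).compLeft ι

@[simp]
lemma redMod_apply (p : ℕ) (x : ι → ℤ) (i : ι) : redMod p x i = x i := rfl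

lemma injective_zsmul_of_gcd_eq_one {p : ℕ} {d : ℤ} (hd : Int.gcd d p = 1) :
    Function.Injective fun a : ι → ZMod p => d • a := by
  have hunit : IsUnit (d : ZMod p) :=
    (ZMod.coe_int_isUnit_iff_isCoprime d p).2 (Int.isCoprime_iff_gcd_eq_one.2 hd).symm
  intro a b hab
  simp only [← Int.cast_smul_eq_zsmul (ZMod p)] at hab
  exact hunit.smul_left_cancel.1 hab

variable [Fintype ι] [DecidableEq ι]

/-- The action of an integer matrix on `(ℤ/pℤ)^ι`, as a ring homomorphism into the endomorphisms,
so that powers of a matrix act as iterates and integer multiples of `1` as scalars. -/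
def modEnd (p : ℕ) : Matrix ι ι ℤ →+* Module.End (ZMod p) (ι → ZMod p) :=
  (toLinAlgEquiv' : Matrix ι ι (ZMod p) ≃ₐ[ZMod p] _).toRingHom.comp
    (Int.castRingHom (ZMod p)).mapMatrix

lemma modEnd_apply (p : ℕ) (M : Matrix ι ι ℤ) (a : ι → ZMod p) :
    modEnd p M a = M.map (Int.castRingHom (ZMod p)) *ᵥ a := rfl

lemma modEnd_redMod (p : ℕ) (M : Matrix ι ι ℤ) (x : ι → ℤ) :
    modEnd p M (redMod p x) = redMod p (M *ᵥ x) :=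
  funext fun i => (RingHom.map_mulVec (Int.castRingHom (ZMod p)) M x i).symm

lemma modEnd_transpose_apply (p : ℕ) (M : Matrix ι ι ℤ) (a : ι → ZMod p) (i : ι) :
    modEnd p Mᵀ a i = a ⬝ᵥ redMod p fun j => M j i := by
  rw [dotProduct_comm]
  rfl

lemma modEnd_transpose_dotProduct (p : ℕ) (M : Matrix ι ι ℤ) (a : ι → ZMod p) (x : ι → ℤ) :
    modEnd p Mᵀ a ⬝ᵥ redMod p x = a ⬝ᵥ redMod p (M *ᵥ x) := by
  rw [← modEnd_redMod, modEnd_apply, modEnd_apply, transpose_map, mulVec_transpose,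
    dotProduct_mulVec]

lemma modEnd_pow_apply (p : ℕ) (M : Matrix ι ι ℤ) (n : ℕ) (a : ι → ZMod p) :
    modEnd p (M ^ n) a = (modEnd p M)^[n] a := by
  rw [map_pow, Module.End.pow_apply]

lemma modEnd_adjugate_modEnd (p : ℕ) (M : Matrix ι ι ℤ) (a : ι → ZMod p) :
    modEnd p M.adjugate (modEnd p M a) = M.det • a := by
  rw [← Module.End.mul_apply, ← map_mul, adjugate_mul, map_zsmul, map_one]
  rfl

lemma bijective_modEnd {p : ℕ} [NeZero p] {M : Matrix ι ι ℤ} (hM : Int.gcd M.det p = 1) :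
    Function.Bijective (modEnd p M) := by
  refine Finite.injective_iff_bijective.1 fun a b hab => injective_zsmul_of_gcd_eq_one hM ?_
  simp only [← modEnd_adjugate_modEnd, hab]

end Reduction

section Fourier

lemma hasSum_mul_of_summable_norm {R α β : Type*} [NormedRing R] [CompleteSpace R] {f : α → R}
    {g : β → R} {s t : R} (hf : HasSum f s) (hg : HasSum g t) (hf' : Summable fun i => ‖f i‖)
    (hg' : Summable fun i => ‖g i‖) : HasSum (fun q : α × β => f q.1 * g q.2) (s * t) :=
  hf.mul hg (summable_mul_of_summable_norm hf' hg')

variable {ι : Type*} [Fintype ι] {p : ℕ} [NeZero p]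

lemma sum_stdAddChar_dotProduct [DecidableEq ι] (x : ι → ZMod p) :
    ∑ a : ι → ZMod p, ZMod.stdAddChar (a ⬝ᵥ x) =
      if x = 0 then (p : ℂ) ^ Fintype.card ι else 0 := by
  have hprod (a : ι → ZMod p) :
      (ZMod.stdAddChar (a ⬝ᵥ x) : ℂ) = ∏ i, ZMod.stdAddChar (a i * x i) :=
    map_prod ZMod.stdAddChar.toMonoidHom (fun i => Multiplicative.ofAdd (a i * x i)) Finset.univ
  simp only [hprod]
  rw [← Fintype.prod_sum fun (i : ι) (b : ZMod p) => (ZMod.stdAddChar (b * x i) : ℂ)]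
  simp only [AddChar.sum_mulShift _ (ZMod.isPrimitive_stdAddChar p), ZMod.card,
    Nat.cast_ite, Nat.cast_zero]
  rw [Finset.prod_ite_zero, Finset.prod_const, Finset.card_univ]
  simp [funext_iff]

lemma sum_norm_sum_mul_stdAddChar_sq [DecidableEq ι] (g : (ι → ZMod p) → ℂ) :
    ∑ a : ι → ZMod p, ‖∑ x, g x * ZMod.stdAddChar (a ⬝ᵥ x)‖ ^ 2 =
      (p : ℝ) ^ Fintype.card ι * ∑ x, ‖g x‖ ^ 2 := by
  have expand (a : ι → ZMod p) : ((‖∑ x, g x * ZMod.stdAddChar (a ⬝ᵥ x)‖ ^ 2 : ℝ) : ℂ) =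
      ∑ x, ∑ y, g x * (starRingEnd ℂ) (g y) * ZMod.stdAddChar (a ⬝ᵥ (x - y)) := by
    rw [Complex.ofReal_pow, ← Complex.mul_conj', map_sum, Finset.sum_mul_sum]
    refine Finset.sum_congr rfl fun x _ => Finset.sum_congr rfl fun y _ => ?_
    rw [map_mul, ← AddChar.map_neg_eq_conj, dotProduct_sub, sub_eq_add_neg,
      AddChar.map_add_eq_mul]
    ring
  have parseval : ((∑ a : ι → ZMod p, ‖∑ x, g x * ZMod.stdAddChar (a ⬝ᵥ x)‖ ^ 2 : ℝ) : ℂ) =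
      ∑ x, ∑ y, g x * (starRingEnd ℂ) (g y) *
        ∑ a : ι → ZMod p, ZMod.stdAddChar (a ⬝ᵥ (x - y)) := by
    simp only [Complex.ofReal_sum, expand, Finset.mul_sum]
    rw [Finset.sum_comm]
    exact Finset.sum_congr rfl fun x _ => Finset.sum_comm
  simp only [sum_stdAddChar_dotProduct, sub_eq_zero, mul_ite, mul_zero, Finset.sum_ite_eq,
    Finset.mem_univ, if_true, Complex.mul_conj', ← Finset.sum_mul] at parseval
  rw [mul_comm]
  exact_mod_cast parseval

/-- Fourier transform at the frequency `a ∈ (ℤ/pℤ)^ι` of a weight on `ℤ^ι`, taken modulo `p`; it is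
the junk value `0` where the series does not converge. -/
def fourierMod (p : ℕ) [NeZero p] (g : (ι → ℤ) → ℝ) (a : ι → ZMod p) : ℂ :=
  ∑' x : ι → ℤ, g x * ZMod.stdAddChar (a ⬝ᵥ redMod p x)

lemma norm_mul_stdAddChar (c : ℂ) (z : ZMod p) : ‖c * ZMod.stdAddChar z‖ = ‖c‖ := by
  rw [norm_mul, AddChar.norm_apply, mul_one]

lemma summable_norm_mul_stdAddChar {g : (ι → ℤ) → ℝ} (hg : Summable g) (a : ι → ZMod p) :
    Summable fun x => ‖(g x : ℂ) * ZMod.stdAddChar (a ⬝ᵥ redMod p x)‖ := by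
  simpa only [norm_mul_stdAddChar, Complex.norm_real] using hg.norm

lemma hasSum_fourierMod {g : (ι → ℤ) → ℝ} (hg : Summable g) (a : ι → ZMod p) :
    HasSum (fun x => (g x : ℂ) * ZMod.stdAddChar (a ⬝ᵥ redMod p x)) (fourierMod p g a) :=
  (summable_norm_mul_stdAddChar hg a).of_norm.hasSum

lemma fourierMod_zero (g : (ι → ℤ) → ℝ) : fourierMod p g 0 = ∑' x, g x := by
  simp [fourierMod, Complex.ofReal_tsum]

lemma sum_tsum_fiber_mul_stdAddChar [DecidableEq ι] {g : (ι → ℤ) → ℝ} (hg : Summable g)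
    (a : ι → ZMod p) :
    ∑ x, ((∑' y : {y // redMod p y = x}, g y : ℝ) : ℂ) * ZMod.stdAddChar (a ⬝ᵥ x) =
      fourierMod p g a := by
  have hsigma := (Equiv.sigmaFiberEquiv (redMod p)).hasSum_iff.2 (hasSum_fourierMod hg a)
  refine (hasSum_fintype _).unique (hsigma.sigma fun x => ?_)
  have hfiber : HasSum (fun y : {y // redMod p y = x} => g y)
      (∑' y : {y // redMod p y = x}, g y) := (hg.subtype _).hasSum
  refine ((Complex.hasSum_ofReal.2 hfiber).mul_right (ZMod.stdAddChar (a ⬝ᵥ x))).congr_fun ?_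
  rintro ⟨y, rfl⟩
  rfl

lemma hasSum_norm_fourierMod_sq {g : (ι → ℤ) → ℝ} (hg : Summable g) (a : ι → ZMod p) :
    HasSum (fun q : (ι → ℤ) × (ι → ℤ) =>
        g q.1 * g q.2 * (ZMod.stdAddChar (a ⬝ᵥ redMod p (q.1 - q.2))).re)
      (‖fourierMod p g a‖ ^ 2) := by
  have hsum := hasSum_fourierMod hg a
  have hconj := (Complex.hasSum_conj' (f := _) (x := _)).2 hsum
  have hprod := Complex.hasSum_re <|
    hasSum_mul_of_summable_norm hsum hconj hsum.summable.norm hconj.summable.norm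
  have hre : (fourierMod p g a * (starRingEnd ℂ) (fourierMod p g a)).re =
      ‖fourierMod p g a‖ ^ 2 := by
    rw [Complex.mul_conj']
    norm_cast
  rw [hre] at hprod
  refine hprod.congr_fun fun q => ?_
  rw [map_sub, dotProduct_sub, sub_eq_add_neg, AddChar.map_add_eq_mul, AddChar.map_neg_eq_conj,
    map_mul, Complex.conj_ofReal, mul_mul_mul_comm, ← Complex.ofReal_mul, Complex.re_ofReal_mul]

lemma abs_valMinAbs_le (z : ZMod p) : |(z.valMinAbs : ℝ)| ≤ p / 2 := by
  rw [← Int.cast_abs, ← Nat.cast_natAbs, le_div_iff₀ two_pos]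
  have := z.natAbs_valMinAbs_le
  exact_mod_cast (by omega : z.valMinAbs.natAbs * 2 ≤ p)

lemma eight_mul_sq_le_one_sub_re_stdAddChar (z : ZMod p) :
    8 * ((z.valMinAbs : ℝ) / p) ^ 2 ≤ 1 - (ZMod.stdAddChar z : ℂ).re := by
  have hp : (0 : ℝ) < p := by exact_mod_cast NeZero.pos p
  have hre : (ZMod.stdAddChar z : ℂ).re = Real.cos (2 * Real.pi * (z.valMinAbs / p)) := by
    conv_lhs => rw [← ZMod.coe_valMinAbs z, ZMod.stdAddChar_coe]
    rw [← Complex.exp_ofReal_mul_I_re]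
    push_cast
    ring_nf
  have hhalf : |(z.valMinAbs : ℝ) / p| ≤ 1 / 2 := by
    rw [abs_div, abs_of_pos hp, div_le_iff₀ hp]
    linarith [abs_valMinAbs_le z]
  have hcos := Real.cos_le_one_sub_mul_cos_sq (x := 2 * Real.pi * (z.valMinAbs / p)) (by
    rw [abs_mul, abs_of_pos Real.two_pi_pos]
    nlinarith [Real.pi_pos])
  have hscale : 2 / Real.pi ^ 2 * (2 * Real.pi * (z.valMinAbs / p)) ^ 2 =
      8 * ((z.valMinAbs : ℝ) / p) ^ 2 := by
    field_simp
    ring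
  linarith

lemma norm_fourierMod_sq_le {μ : (ι → ℤ) → ℝ} (hμ0 : ∀ x, 0 ≤ μ x) (hμ1 : HasSum μ 1)
    (a : ι → ZMod p) (h g : ι → ℤ) :
    ‖fourierMod p μ a‖ ^ 2 ≤
      1 - μ h * μ g * (8 * (((a ⬝ᵥ redMod p (h - g)).valMinAbs : ℝ) / p) ^ 2) := by
  have hdefect := (hμ1.mul hμ1 (hμ1.summable.mul_of_nonneg hμ1.summable hμ0 hμ0)).sub
    (hasSum_norm_fourierMod_sq (p := p) hμ1.summable a)
  have hterm : ∀ q : (ι → ℤ) × (ι → ℤ),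
      μ q.1 * μ q.2 * (8 * (((a ⬝ᵥ redMod p (q.1 - q.2)).valMinAbs : ℝ) / p) ^ 2) ≤
        μ q.1 * μ q.2 - μ q.1 * μ q.2 * (ZMod.stdAddChar (a ⬝ᵥ redMod p (q.1 - q.2)) : ℂ).re :=
    fun q => by
      rw [← mul_one_sub]
      exact mul_le_mul_of_nonneg_left (eight_mul_sq_le_one_sub_re_stdAddChar _)
        (mul_nonneg (hμ0 _) (hμ0 _))
  have hle := le_hasSum hdefect (h, g) fun q _ => le_trans
    (mul_nonneg (mul_nonneg (hμ0 _) (hμ0 _)) (by positivity)) (hterm q)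
  linarith [hterm (h, g)]

lemma norm_fourierMod_le_one {μ : (ι → ℤ) → ℝ} (hμ0 : ∀ x, 0 ≤ μ x) (hμ1 : HasSum μ 1)
    (a : ι → ZMod p) : ‖fourierMod p μ a‖ ≤ 1 := by
  calc ‖fourierMod p μ a‖ ≤ ∑' x, ‖(μ x : ℂ) * ZMod.stdAddChar (a ⬝ᵥ redMod p x)‖ :=
        norm_tsum_le_tsum_norm (summable_norm_mul_stdAddChar hμ1.summable a)
    _ = 1 := by
        simp only [norm_mul_stdAddChar, Complex.norm_real, Real.norm_of_nonneg (hμ0 _),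
          hμ1.tsum_eq]

end Fourier

section Chain

lemma hasSum_tsum_mul_sub {G 𝕜 : Type*} [AddCommGroup G] [NormedField 𝕜] [CompleteSpace 𝕜]
    (P μ E : G → 𝕜) (φ : G → G) {s : 𝕜} (hPμ : Summable fun q : G × G => P q.1 * μ q.2)
    (hs : HasSum (fun q : G × G => P q.1 * μ q.2 * E (q.2 + φ q.1)) s) :
    HasSum (fun x => (∑' y, P y * μ (x - φ y)) * E x) s := by
  let e : G × G ≃ G × G :=
    { toFun q := (q.2, q.1 - φ q.2)
      invFun q := (q.2 + φ q.1, q.1)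
      left_inv q := by simp
      right_inv q := by simp }
  refine (e.hasSum_iff.2 hs).prod_fiberwise fun x => ?_
  simpa [e, Function.comp_def] using ((e.summable_iff.2 hPμ).prod_factor x).hasSum.mul_right (E x)

variable {k : ℕ} {A : Matrix (Fin k) (Fin k) ℤ} {μ : (Fin k → ℤ) → ℝ}

lemma chainDist_nonneg (hμ0 : ∀ x, 0 ≤ μ x) (n : ℕ) (x : Fin k → ℤ) : 0 ≤ chainDist A μ n x := by
  induction n generalizing x with
  | zero => unfold chainDist; split_ifs <;> norm_num
  | succ n ih => exact tsum_nonneg fun y => mul_nonneg (ih y) (hμ0 _)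

lemma hasSum_chainDist (hμ1 : HasSum μ 1) (n : ℕ) : HasSum (chainDist A μ n) 1 := by
  induction n with
  | zero => exact hasSum_ite_eq 0 1
  | succ n ih =>
    have hprod := summable_mul_of_summable_norm ih.summable.norm hμ1.summable.norm
    simpa [chainDist] using hasSum_tsum_mul_sub (chainDist A μ n) μ 1 A.mulVec hprod
      (by simpa using ih.mul hμ1 hprod)

variable {p : ℕ} [NeZero p]

lemma fourierMod_chainDist_zero (a : Fin k → ZMod p) : fourierMod p (chainDist A μ 0) a = 1 := by
  rw [fourierMod, tsum_eq_single 0 fun x hx => by simp [chainDist, hx]]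
  simp [chainDist]

lemma fourierMod_chainDist_succ (hμ1 : HasSum μ 1) (n : ℕ) (a : Fin k → ZMod p) :
    fourierMod p (chainDist A μ (n + 1)) a =
      fourierMod p (chainDist A μ n) (modEnd p Aᵀ a) * fourierMod p μ a := by
  have hP := (hasSum_chainDist (A := A) hμ1 n).summable
  have hP' := hasSum_fourierMod hP (modEnd p Aᵀ a)
  have hμ' := hasSum_fourierMod hμ1.summable a
  have hprod := hasSum_mul_of_summable_norm hP' hμ' hP'.summable.norm hμ'.summable.norm
  have hPμ : Summable fun q : (Fin k → ℤ) × (Fin k → ℤ) => (chainDist A μ n q.1 : ℂ) * μ q.2 := by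
    exact_mod_cast Complex.summable_ofReal.2
      (summable_mul_of_summable_norm hP.norm hμ1.summable.norm)
  have hconv := hasSum_tsum_mul_sub (fun x => (chainDist A μ n x : ℂ)) (fun x => (μ x : ℂ))
    (fun x => ZMod.stdAddChar (a ⬝ᵥ redMod p x)) A.mulVec hPμ <| hprod.congr_fun fun q => by
      rw [map_add, dotProduct_add, AddChar.map_add_eq_mul, modEnd_transpose_dotProduct]
      ring
  rw [← hconv.tsum_eq]
  simp only [fourierMod, chainDist, Complex.ofReal_tsum, Complex.ofReal_mul]

lemma fourierMod_chainDist (hμ1 : HasSum μ 1) (n : ℕ) (a : Fin k → ZMod p) :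
    fourierMod p (chainDist A μ n) a =
      ∏ j ∈ Finset.range n, fourierMod p μ ((modEnd p Aᵀ)^[j] a) := by
  induction n generalizing a with
  | zero => exact fourierMod_chainDist_zero a
  | succ n ih => simp only [fourierMod_chainDist_succ hμ1, ih, Finset.prod_range_succ',
      Function.iterate_succ_apply, Function.iterate_zero_apply]

lemma fourierMod_chainDist_mul (hμ1 : HasSum μ 1) (q N : ℕ) (a : Fin k → ZMod p) :
    fourierMod p (chainDist A μ (q * N)) a =
      ∏ b ∈ Finset.range q, fourierMod p (chainDist A μ N) ((modEnd p (Aᵀ ^ N))^[b] a) := by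
  simp only [fourierMod_chainDist hμ1, prod_range_mul_eq_prod_prod, ← modEnd_pow_apply, ← pow_mul,
    ← Module.End.mul_apply, ← map_mul, ← pow_add, mul_comm N, add_comm]

lemma norm_fourierMod_chainDist_antitone (hμ0 : ∀ x, 0 ≤ μ x) (hμ1 : HasSum μ 1)
    (a : Fin k → ZMod p) : Antitone fun n => ‖fourierMod p (chainDist A μ n) a‖ := by
  refine antitone_nat_of_succ_le fun n => ?_
  simp only [fourierMod_chainDist hμ1, Finset.prod_range_succ, norm_mul]
  exact mul_le_of_le_one_right (norm_nonneg _) (norm_fourierMod_le_one hμ0 hμ1 _)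

lemma norm_fourierMod_chainDist_le (hμ0 : ∀ x, 0 ≤ μ x) (hμ1 : HasSum μ 1) {j n : ℕ} (hj : j < n)
    (a : Fin k → ZMod p) :
    ‖fourierMod p (chainDist A μ n) a‖ ≤ ‖fourierMod p μ (modEnd p (Aᵀ ^ j) a)‖ := by
  rw [fourierMod_chainDist hμ1, norm_prod, modEnd_pow_apply,
    ← Finset.mul_prod_erase _ _ (Finset.mem_range.2 hj)]
  exact mul_le_of_le_one_right (norm_nonneg _)
    (Finset.prod_le_one (fun _ _ => norm_nonneg _) fun _ _ => norm_fourierMod_le_one hμ0 hμ1 _)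

lemma sq_sum_abs_sub_inv_le {ι : Type*} [Fintype ι] [DecidableEq ι] {g : (ι → ZMod p) → ℝ}
    (hg : ∑ x, g x = 1) :
    (∑ x, |g x - ((p : ℝ) ^ Fintype.card ι)⁻¹|) ^ 2 ≤
      ∑ a : ι → ZMod p, ‖∑ x, (g x : ℂ) * ZMod.stdAddChar (a ⬝ᵥ x)‖ ^ 2 - 1 := by
  have hp : (p : ℝ) ^ Fintype.card ι ≠ 0 := pow_ne_zero _ (NeZero.ne _)
  have hcard : (Fintype.card (ι → ZMod p) : ℝ) = (p : ℝ) ^ Fintype.card ι := by simp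
  have hvar : (p : ℝ) ^ Fintype.card ι * ∑ x, (g x - ((p : ℝ) ^ Fintype.card ι)⁻¹) ^ 2 =
      (p : ℝ) ^ Fintype.card ι * ∑ x, g x ^ 2 - 1 := by
    simp only [sub_sq, Finset.sum_add_distrib, Finset.sum_sub_distrib, ← Finset.sum_mul,
      ← Finset.mul_sum, hg, Finset.sum_const, Finset.card_univ, hcard, nsmul_eq_mul]
    field_simp
    ring
  have hcauchy := sq_sum_le_card_mul_sum_sq (s := (Finset.univ : Finset (ι → ZMod p)))
    (f := fun x => |g x - ((p : ℝ) ^ Fintype.card ι)⁻¹|)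
  simp only [sq_abs, Finset.card_univ, hcard, hvar] at hcauchy
  simpa only [sum_norm_sum_mul_stdAddChar_sq, Complex.norm_real, Real.norm_eq_abs, sq_abs]
    using hcauchy

lemma sum_chainDistMod_mul_stdAddChar (hμ1 : HasSum μ 1) (n : ℕ) (a : Fin k → ZMod p) :
    ∑ x, (chainDistMod A μ p n x : ℂ) * ZMod.stdAddChar (a ⬝ᵥ x) =
      fourierMod p (chainDist A μ n) a :=
  sum_tsum_fiber_mul_stdAddChar (hasSum_chainDist hμ1 n).summable a

lemma sum_chainDistMod (hμ1 : HasSum μ 1) (n : ℕ) : ∑ x, chainDistMod A μ p n x = 1 := by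
  have h := sum_chainDistMod_mul_stdAddChar (A := A) (p := p) hμ1 n 0
  rw [fourierMod_zero, (hasSum_chainDist hμ1 n).tsum_eq] at h
  simp only [zero_dotProduct, AddChar.map_zero_eq_one, mul_one] at h
  exact_mod_cast h

lemma four_mul_tvDist_sq_le (hμ1 : HasSum μ 1) (n : ℕ) :
    4 * tvDist A μ p n ^ 2 ≤
      ∑ a : Fin k → ZMod p, ‖fourierMod p (chainDist A μ n) a‖ ^ 2 - 1 := by
  have h := sq_sum_abs_sub_inv_le (sum_chainDistMod (A := A) (p := p) hμ1 n)
  simp only [sum_chainDistMod_mul_stdAddChar hμ1, Fintype.card_fin] at h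
  rw [tvDist, tsum_fintype]
  simp only [unif]
  linarith

lemma tvDist_le_one (hμ0 : ∀ x, 0 ≤ μ x) (hμ1 : HasSum μ 1) (n : ℕ) : tvDist A μ p n ≤ 1 := by
  have hp : (p : ℝ) ^ k ≠ 0 := pow_ne_zero _ (NeZero.ne _)
  have hU : ∑ _ : Fin k → ZMod p, unif k p = 1 := by simp [unif, hp]
  have htriangle : ∑ x, |chainDistMod A μ p n x - unif k p| ≤
      ∑ x, (chainDistMod A μ p n x + unif k p) := Finset.sum_le_sum fun x _ => by
    have hP : 0 ≤ chainDistMod A μ p n x := tsum_nonneg fun y => chainDist_nonneg hμ0 n y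
    have hu : 0 ≤ unif k p := by unfold unif; positivity
    exact abs_le.2 ⟨by linarith, by linarith⟩
  rw [Finset.sum_add_distrib, sum_chainDistMod hμ1, hU] at htriangle
  rw [tvDist, tsum_fintype]
  linarith

end Chain

section Expansion

lemma eventually_norm_pow_le_half {R : Type*} [NormedRing R] [NormedAlgebra ℂ R] [CompleteSpace R]
    {a : R} (ha : ∀ z ∈ spectrum ℂ a, ‖z‖ < 1) : ∀ᶠ n : ℕ in Filter.atTop, ‖a ^ n‖ ≤ 1 / 2 := by
  cases subsingleton_or_nontrivial R
  · exact .of_forall fun n => by rw [Subsingleton.elim (a ^ n) 0, norm_zero]; norm_num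
  have hradius : spectralRadius ℂ a < (1 : NNReal) :=
    spectrum.spectralRadius_lt_of_forall_lt a fun z hz => by exact_mod_cast ha z hz
  obtain ⟨r, har, hr1⟩ := ENNReal.lt_iff_exists_nnreal_btwn.1 hradius
  have hroot :=
    (spectrum.pow_nnnorm_pow_one_div_tendsto_nhds_spectralRadius a).eventually_lt_const har
  have hgeom : ∀ᶠ n : ℕ in Filter.atTop, (r : ℝ) ^ n < 1 / 2 :=
    (tendsto_pow_atTop_nhds_zero_of_lt_one r.2 (by exact_mod_cast hr1)).eventually_lt_const
      (by norm_num)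
  filter_upwards [hroot, hgeom, Filter.eventually_gt_atTop 0] with n hn hrn hn0
  have hpow := ENNReal.rpow_le_rpow hn.le n.cast_nonneg
  rw [← ENNReal.rpow_mul, one_div_mul_cancel (by exact_mod_cast hn0.ne'), ENNReal.rpow_one,
    ENNReal.rpow_natCast] at hpow
  have hle : ‖a ^ n‖ ≤ (r : ℝ) ^ n := by exact_mod_cast hpow
  exact hle.trans hrn.le

lemma norm_intCast_comp {ι : Type*} [Fintype ι] (u : ι → ℤ) : ‖fun i => (u i : ℂ)‖ = ‖u‖ := by
  simp only [Pi.norm_def]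
  congr! 2 with i
  ext
  simp [Int.norm_eq_abs]

lemma exists_norm_mulVec_le {ι : Type*} [Fintype ι] (M : Matrix ι ι ℤ) :
    ∃ C : ℝ, 1 ≤ C ∧ ∀ u : ι → ℤ, ‖M *ᵥ u‖ ≤ C * ‖u‖ := by
  let _ : SeminormedAddCommGroup (Matrix ι ι ℤ) := Matrix.linftyOpSeminormedAddCommGroup
  exact ⟨max 1 ‖M‖, le_max_left _ _, fun u =>
    (Matrix.linfty_opNorm_mulVec M u).trans (by gcongr; exact le_max_right _ _)⟩

variable {ι : Type*} [Fintype ι] [DecidableEq ι]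

lemma eventually_two_mul_norm_le_pow_mulVec {M : Matrix ι ι ℂ}
    (hM : ∀ z ∈ spectrum ℂ M, 1 < ‖z‖) :
    ∀ᶠ n : ℕ in Filter.atTop, ∀ v : ι → ℂ, 2 * ‖v‖ ≤ ‖(M ^ n) *ᵥ v‖ := by
  let _ : NormedRing (Matrix ι ι ℂ) := Matrix.linftyOpNormedRing
  let _ : NormedAlgebra ℂ (Matrix ι ι ℂ) := Matrix.linftyOpNormedAlgebra
  have : CompleteSpace (Matrix ι ι ℂ) := FiniteDimensional.complete ℂ _
  have hunit : IsUnit M := spectrum.zero_notMem_iff ℂ |>.1 fun h => by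
    exact absurd (hM 0 h) (by simp)
  obtain ⟨U, rfl⟩ := hunit
  have hinv : ∀ z ∈ spectrum ℂ (↑U⁻¹ : Matrix ι ι ℂ), ‖z‖ < 1 := fun z hz => by
    have h := hM z⁻¹ ((spectrum.inv₀_mem_iff (r := z)).2 hz)
    rw [norm_inv] at h
    exact (one_lt_inv_iff₀.1 h).2
  filter_upwards [eventually_norm_pow_le_half hinv] with n hn v
  calc 2 * ‖v‖ = 2 * ‖(↑U⁻¹ : Matrix ι ι ℂ) ^ n *ᵥ ((U : Matrix ι ι ℂ) ^ n *ᵥ v)‖ := by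
        rw [mulVec_mulVec, ← Units.val_pow_eq_pow_val, ← Units.val_pow_eq_pow_val, inv_pow,
          Units.inv_mul, one_mulVec]
    _ ≤ 2 * (1 / 2 * ‖(U : Matrix ι ι ℂ) ^ n *ᵥ v‖) := by
        gcongr
        exact (Matrix.linfty_opNorm_mulVec _ _).trans (by gcongr)
    _ = ‖(U : Matrix ι ι ℂ) ^ n *ᵥ v‖ := by ring

lemma eventually_two_mul_norm_le_transpose_pow_mulVec {A : Matrix ι ι ℤ}
    (hA : ∀ z : ℂ, (A.map (Int.cast : ℤ → ℂ)).charpoly.IsRoot z → 1 < ‖z‖) :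
    ∀ᶠ n : ℕ in Filter.atTop, ∀ u : ι → ℤ, 2 * ‖u‖ ≤ ‖(Aᵀ ^ n) *ᵥ u‖ := by
  have hspec : ∀ z ∈ spectrum ℂ (A.map (Int.castRingHom ℂ))ᵀ, 1 < ‖z‖ := fun z hz => by
    rw [Matrix.mem_spectrum_iff_isRoot_charpoly, Matrix.charpoly_transpose] at hz
    exact hA z hz
  filter_upwards [eventually_two_mul_norm_le_pow_mulVec hspec] with n hn u
  have hcast : (fun i => (((Aᵀ ^ n) *ᵥ u) i : ℂ)) =
      ((A.map (Int.castRingHom ℂ))ᵀ ^ n) *ᵥ fun i => (u i : ℂ) := by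
    rw [← transpose_map, ← Matrix.map_pow]
    exact funext fun i => RingHom.map_mulVec (Int.castRingHom ℂ) (Aᵀ ^ n) u i
  simpa only [← hcast, norm_intCast_comp] using hn fun i => (u i : ℂ)

lemma one_lt_norm_of_pow_eq_natCast {z : ℂ} {l m : ℕ} (hm : 2 ≤ m) (hz : z ^ l = m) :
    1 < ‖z‖ := by
  have hpow : ‖z‖ ^ l = m := by rw [← norm_pow, hz, Complex.norm_natCast]
  refine lt_of_pow_lt_pow_left₀ l (norm_nonneg z) ?_
  rw [one_pow, hpow]
  exact_mod_cast hm

end Expansion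

section Digits

variable {ι : Type*} {p : ℕ}

/-- The representative in `ℤ^ι` of a vector modulo `p` whose entries lie in `(-p/2, p/2]`. -/
def balancedLift (x : ι → ZMod p) : ι → ℤ := fun i => (x i).valMinAbs

@[simp]
lemma redMod_balancedLift (x : ι → ZMod p) : redMod p (balancedLift x) = x := by
  ext i; simp [balancedLift]

variable [Fintype ι]

lemma norm_balancedLift_le [NeZero p] (x : ι → ZMod p) : ‖balancedLift x‖ ≤ p / 2 :=
  (pi_norm_le_iff_of_nonneg (by positivity)).2 fun i => by
    rw [Int.norm_eq_abs]
    exact abs_valMinAbs_le (x i)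

lemma balancedLift_redMod [NeZero p] {u : ι → ℤ} (hu : ‖u‖ < p / 2) :
    balancedLift (redMod p u) = u := by
  ext i
  have hi := (norm_le_pi_norm u i).trans_lt hu
  rw [Int.norm_eq_abs, lt_div_iff₀ two_pos, ← abs_two, ← abs_mul, abs_lt] at hi
  exact (ZMod.valMinAbs_spec _ _).2 ⟨rfl, by exact_mod_cast hi.1, by exact_mod_cast hi.2.le⟩

lemma norm_balancedLift_redMod_le [NeZero p] (u : ι → ℤ) : ‖balancedLift (redMod p u)‖ ≤ ‖u‖ := by
  by_cases hu : ‖u‖ < p / 2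
  · rw [balancedLift_redMod hu]
  · exact (norm_balancedLift_le _).trans (not_lt.1 hu)

variable [DecidableEq ι]

/-- The carry produced when `M` is applied to the balanced representative of `x`: the integer
vector by which `p` must be multiplied to bring the image back to a balanced representative. -/
def digit (M : Matrix ι ι ℤ) (x : ι → ZMod p) : ι → ℤ :=
  fun i => (M *ᵥ balancedLift x - balancedLift (modEnd p M x)) i / p

lemma mulVec_balancedLift (M : Matrix ι ι ℤ) (x : ι → ZMod p) :
    M *ᵥ balancedLift x = balancedLift (modEnd p M x) + (p : ℤ) • digit M x := by
  have hred : redMod p (M *ᵥ balancedLift x - balancedLift (modEnd p M x)) = 0 := by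
    rw [map_sub, ← modEnd_redMod, redMod_balancedLift, redMod_balancedLift, sub_self]
  refine eq_add_of_sub_eq' (funext fun i => (Int.mul_ediv_cancel' ?_).symm)
  exact (ZMod.intCast_zmod_eq_zero_iff_dvd _ p).1 (congr_fun hred i)

lemma two_pow_mul_norm_balancedLift_sub_le {M : Matrix ι ι ℤ}
    (hM : ∀ u : ι → ℤ, 2 * ‖u‖ ≤ ‖M *ᵥ u‖) {x y : ι → ZMod p} {t : ℕ}
    (hxy : ∀ j < t, digit M ((modEnd p M)^[j] x) = digit M ((modEnd p M)^[j] y)) :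
    2 ^ t * ‖balancedLift x - balancedLift y‖ ≤
      ‖balancedLift ((modEnd p M)^[t] x) - balancedLift ((modEnd p M)^[t] y)‖ := by
  induction t with
  | zero => simp
  | succ t ih =>
    have hstep : balancedLift ((modEnd p M)^[t + 1] x) - balancedLift ((modEnd p M)^[t + 1] y) =
        M *ᵥ (balancedLift ((modEnd p M)^[t] x) - balancedLift ((modEnd p M)^[t] y)) := by
      rw [mulVec_sub, mulVec_balancedLift, mulVec_balancedLift, hxy t t.lt_succ_self,
        add_sub_add_right_eq_sub, Function.iterate_succ_apply', Function.iterate_succ_apply']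
    rw [hstep, pow_succ']
    linarith [ih fun j hj => hxy j (hj.trans t.lt_succ_self),
      hM (balancedLift ((modEnd p M)^[t] x) - balancedLift ((modEnd p M)^[t] y))]

variable [NeZero p] {M : Matrix ι ι ℤ} {C : ℝ}

lemma norm_digit_le (hC : 1 ≤ C) (hM : ∀ u : ι → ℤ, ‖M *ᵥ u‖ ≤ C * ‖u‖) (x : ι → ZMod p) :
    ‖digit M x‖ ≤ C := by
  have hp : (0 : ℝ) < p := by exact_mod_cast NeZero.pos p
  refine le_of_mul_le_mul_left ?_ hp
  calc (p : ℝ) * ‖digit M x‖ = ‖M *ᵥ balancedLift x - balancedLift (modEnd p M x)‖ := by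
        rw [mulVec_balancedLift, add_sub_cancel_left, norm_smul, Int.norm_natCast]
    _ ≤ C * (p / 2) + p / 2 := (norm_sub_le _ _).trans <| add_le_add
        ((hM _).trans (by gcongr; exact norm_balancedLift_le x)) (norm_balancedLift_le _)
    _ ≤ p * C := by nlinarith

lemma le_norm_balancedLift_of_digit_ne_zero (hC : 0 < C) (hM : ∀ u : ι → ℤ, ‖M *ᵥ u‖ ≤ C * ‖u‖)
    {x : ι → ZMod p} (hx : digit M x ≠ 0) : p / (2 * C) ≤ ‖balancedLift x‖ := by
  contrapose! hx
  rw [lt_div_iff₀ (by positivity)] at hx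
  have hlift : balancedLift (modEnd p M x) = M *ᵥ balancedLift x := by
    rw [← balancedLift_redMod (p := p) (u := M *ᵥ balancedLift x), ← modEnd_redMod,
      redMod_balancedLift]
    linarith [hM (balancedLift x)]
  ext i
  simp [digit, hlift]

lemma injective_digit_iterate (hM : ∀ u : ι → ℤ, 2 * ‖u‖ ≤ ‖M *ᵥ u‖) {t : ℕ} (ht : p < 2 ^ t) :
    Function.Injective fun (x : ι → ZMod p) (j : Fin t) => digit M ((modEnd p M)^[j] x) := by
  intro x y hxy
  have hexpand := two_pow_mul_norm_balancedLift_sub_le hM (x := x) (y := y) (t := t)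
    fun j hj => congr_fun hxy ⟨j, hj⟩
  have hbound :=
    norm_sub_le (balancedLift ((modEnd p M)^[t] x)) (balancedLift ((modEnd p M)^[t] y))
  have hpt : (p : ℝ) < 2 ^ t := by exact_mod_cast ht
  have hlt : ‖balancedLift x - balancedLift y‖ < 1 := by
    refine lt_of_mul_lt_mul_left (a := (2 : ℝ) ^ t) ?_ (by positivity)
    linarith [norm_balancedLift_le ((modEnd p M)^[t] x), norm_balancedLift_le ((modEnd p M)^[t] y)]
  have hlift : balancedLift x = balancedLift y := by
    ext i
    have hi := (norm_le_pi_norm (balancedLift x - balancedLift y) i).trans_lt hlt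
    rw [Int.norm_eq_abs] at hi
    exact sub_eq_zero.1 (Int.abs_lt_one_iff.1 (by exact_mod_cast hi))
  rw [← redMod_balancedLift x, hlift, redMod_balancedLift]

theorem exists_sum_prod_iterate_modEnd_le {M : Matrix ι ι ℤ}
    (hM : ∀ u : ι → ℤ, 2 * ‖u‖ ≤ ‖M *ᵥ u‖) :
    ∃ K : ℕ, ∀ {p : ℕ} [NeZero p] {c : ℤ}, Int.gcd M.det p = 1 → Int.gcd c p = 1 →
      ∀ {f : (ι → ZMod p) → ℝ}, (∀ a, 0 ≤ f a) → (∀ a, f a ≤ 1) →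
        ∀ {β : ℝ}, 0 ≤ β → (∀ a, digit M (c • a) ≠ 0 → f a ≤ β) →
          ∀ {t r : ℕ}, 0 < r → p < 2 ^ t →
            ∑ a, ∏ j ∈ Finset.range (r * t), f ((modEnd p M)^[j] a) ≤ (1 + K * β ^ r) ^ t := by
  obtain ⟨C, hC, hMC⟩ := exists_norm_mulVec_le M
  let D : Finset (ι → ℤ) :=
    (isCompact_closedBall (0 : ι → ℤ) C).finite_of_discrete.toFinset
  refine ⟨D.card, fun {p} _ c hpM hpc f hf0 hf1 β hβ0 hβ t r hr ht => ?_⟩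
  have hcode : Function.Injective fun (a : ι → ZMod p) (j : Fin t) =>
      digit M (c • (modEnd p M)^[j] a) := by
    simpa only [Function.comp_def, ← Module.End.pow_apply, map_zsmul] using
      (injective_digit_iterate hM ht).comp (injective_zsmul_of_gcd_eq_one hpc)
  exact sum_prod_iterate_le (bijective_modEnd hpM) hf0 hf1
    (D := D) (fun a => by simpa [D] using norm_digit_le hC hMC (c • a)) hβ0 hβ hr hcode

end Digits

section Block

lemma exists_one_sub_mul_sq_le {ι : Type*} [Finite ι] {w : ι → ℝ} (hw : ∀ i, 0 < w i) {δ : ℝ}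
    (hδ : 0 < δ) : ∃ β, 0 < β ∧ β < 1 ∧ ∀ i x, δ ≤ |x| → 1 - w i * x ^ 2 ≤ β := by
  obtain ⟨η, hη0, hη⟩ : ∃ η, 0 < η ∧ ∀ i, η ≤ w i := by
    cases isEmpty_or_nonempty ι
    · exact ⟨1, one_pos, isEmptyElim⟩
    · obtain ⟨i, hi⟩ := Finite.exists_min w
      exact ⟨w i, hw i, hi⟩
  refine ⟨Real.exp (-(η * δ ^ 2)), Real.exp_pos _,
    Real.exp_lt_one_iff.2 (neg_neg_of_pos (by positivity)), fun i x hx => ?_⟩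
  calc 1 - w i * x ^ 2 ≤ 1 - η * δ ^ 2 := by
        rw [← sq_abs x]
        gcongr
        exacts [(hw i).le, hη i]
    _ ≤ Real.exp (-(η * δ ^ 2)) := Real.one_sub_le_exp_neg _

variable {ι : Type*} [Fintype ι] [DecidableEq ι]

lemma exists_norm_balancedLift_det_smul_le (M : Matrix ι ι ℤ) :
    ∃ C : ℝ, 1 ≤ C ∧ ∀ (p : ℕ) [NeZero p] (a : ι → ZMod p),
      ‖balancedLift (M.det • a)‖ ≤ C * ‖balancedLift (modEnd p M a)‖ := by
  obtain ⟨C, hC, hM⟩ := exists_norm_mulVec_le M.adjugate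
  refine ⟨C, hC, fun p _ a => ?_⟩
  have hadj : M.det • a = redMod p (M.adjugate *ᵥ balancedLift (modEnd p M a)) := by
    rw [← modEnd_redMod, redMod_balancedLift, modEnd_adjugate_modEnd]
  rw [hadj]
  exact (norm_balancedLift_redMod_le _).trans (hM _)

lemma exists_le_abs_valMinAbs_of_digit_det_smul_ne_zero (M B : Matrix ι ι ℤ) :
    ∃ δ : ℝ, 0 < δ ∧ ∀ (p : ℕ) [NeZero p] (a : ι → ZMod p), digit M (B.det • a) ≠ 0 →
      ∃ i, δ ≤ |((modEnd p B a i).valMinAbs : ℝ) / p| := by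
  obtain ⟨C, hC, hM⟩ := exists_norm_mulVec_le M
  obtain ⟨C', hC', hB⟩ := exists_norm_balancedLift_det_smul_le B
  refine ⟨1 / (2 * C * C'), by positivity, fun p _ a ha => ?_⟩
  have hp : (0 : ℝ) < p := by exact_mod_cast NeZero.pos p
  have hlarge := (le_norm_balancedLift_of_digit_ne_zero (by positivity) hM ha).trans (hB p a)
  simp only [abs_div, abs_of_pos hp, le_div_iff₀ hp]
  contrapose! hlarge
  have hsmall := (pi_norm_lt_iff (x := balancedLift (modEnd p B a)) (by positivity)).2
    fun i => (Int.norm_eq_abs _).trans_lt (hlarge i)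
  calc C' * ‖balancedLift (modEnd p B a)‖ < C' * (1 / (2 * C * C') * p) := by gcongr
    _ = p / (2 * C) := by field_simp

variable {k : ℕ} {A : Matrix (Fin k) (Fin k) ℤ} {μ : (Fin k → ℤ) → ℝ}

lemma modEnd_transpose_colMat_apply {p : ℕ} {y : Fin k → Fin k → ℤ} {i : Fin k} {m : ℕ}
    {x : Fin k → ℤ} (hy : y i = (A ^ m) *ᵥ x) (a : Fin k → ZMod p) :
    modEnd p (colMat y)ᵀ a i = modEnd p (Aᵀ ^ m) a ⬝ᵥ redMod p x := by
  rw [modEnd_transpose_apply, ← transpose_pow, modEnd_transpose_dotProduct, ← hy]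
  rfl

lemma exists_norm_fourierMod_chainDist_sq_le (hμ0 : ∀ x, 0 ≤ μ x) (hμ1 : HasSum μ 1)
    {y x : Fin k → Fin k → ℤ} {m : Fin k → ℕ} (hx : ∀ i, x i ∈ Vset μ)
    (hy : ∀ i, y i = (A ^ m i) *ᵥ x i) {N : ℕ} (hm : ∀ i, m i < N)
    (M : Matrix (Fin k) (Fin k) ℤ) :
    ∃ β : ℝ, 0 < β ∧ β < 1 ∧ ∀ (p : ℕ) [NeZero p] (a : Fin k → ZMod p),
      digit M ((colMat y).det • a) ≠ 0 → ‖fourierMod p (chainDist A μ N) a‖ ^ 2 ≤ β := by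
  obtain ⟨δ, hδ, hdigit⟩ :=
    exists_le_abs_valMinAbs_of_digit_det_smul_ne_zero M (colMat y)ᵀ
  choose h g hh hg hhg using hx
  have hw (i : Fin k) : 0 < μ (h i) * μ (g i) * 8 :=
    mul_pos (mul_pos ((hμ0 _).lt_of_ne' (hh i)) ((hμ0 _).lt_of_ne' (hg i))) (by norm_num)
  obtain ⟨β, hβ0, hβ1, hβ⟩ := exists_one_sub_mul_sq_le hw hδ
  refine ⟨β, hβ0, hβ1, fun p _ a ha => ?_⟩
  obtain ⟨i, hi⟩ := hdigit p a (by rwa [det_transpose])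
  calc ‖fourierMod p (chainDist A μ N) a‖ ^ 2 ≤ ‖fourierMod p μ (modEnd p (Aᵀ ^ m i) a)‖ ^ 2 := by
        gcongr
        exact norm_fourierMod_chainDist_le hμ0 hμ1 (hm i) a
    _ ≤ 1 - μ (h i) * μ (g i) * 8 * (((modEnd p (colMat y)ᵀ a i).valMinAbs : ℝ) / p) ^ 2 := by
        rw [modEnd_transpose_colMat_apply (hy i), hhg, mul_assoc]
        exact norm_fourierMod_sq_le hμ0 hμ1 _ (h i) (g i)
    _ ≤ β := hβ i _ hi

theorem exists_tvDist_sq_le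
    (hA : ∀ z : ℂ, (A.map (Int.cast : ℤ → ℂ)).charpoly.IsRoot z → 1 < ‖z‖)
    (hμ0 : ∀ x, 0 ≤ μ x) (hμ1 : HasSum μ 1) {y : Fin k → Fin k → ℤ}
    (hy : ∀ j, ∃ x ∈ Vset μ, ∃ m : ℕ, y j = (A ^ m) *ᵥ x) :
    ∃ (N K : ℕ) (β : ℝ), 0 < β ∧ β < 1 ∧
      ∀ p : ℕ, 0 < p → Int.gcd A.det p = 1 → Int.gcd (colMat y).det p = 1 →
        ∀ n t r : ℕ, 0 < r → p < 2 ^ t → r * t * N ≤ n →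
          tvDist A μ p n ^ 2 ≤ (1 + K * β ^ r) ^ t - 1 := by
  choose x hx m hy using hy
  obtain ⟨N, hexp, hm⟩ := ((eventually_two_mul_norm_le_transpose_pow_mulVec hA).and
    (Filter.eventually_all.2 fun i => Filter.eventually_gt_atTop (m i))).exists
  obtain ⟨β, hβ0, hβ1, hβ⟩ := exists_norm_fourierMod_chainDist_sq_le hμ0 hμ1 hx hy hm (Aᵀ ^ N)
  obtain ⟨K, hK⟩ := exists_sum_prod_iterate_modEnd_le hexp
  refine ⟨N, K, β, hβ0, hβ1, fun p hp hpA hpB n t r hr ht hn => ?_⟩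
  have : NeZero p := ⟨hp.ne'⟩
  have hpAN : Int.gcd (Aᵀ ^ N).det p = 1 := by
    rw [det_pow, det_transpose]
    exact Int.isCoprime_iff_gcd_eq_one.1 (Int.isCoprime_iff_gcd_eq_one.2 hpA).pow_left
  have hsum : ∑ a : Fin k → ZMod p, ‖fourierMod p (chainDist A μ n) a‖ ^ 2 ≤
      (1 + K * β ^ r) ^ t :=
    calc ∑ a : Fin k → ZMod p, ‖fourierMod p (chainDist A μ n) a‖ ^ 2
        ≤ ∑ a : Fin k → ZMod p, ‖fourierMod p (chainDist A μ (r * t * N)) a‖ ^ 2 := by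
          gcongr with a
          exact norm_fourierMod_chainDist_antitone hμ0 hμ1 a hn
      _ = ∑ a : Fin k → ZMod p, ∏ b ∈ Finset.range (r * t),
            ‖fourierMod p (chainDist A μ N) ((modEnd p (Aᵀ ^ N))^[b] a)‖ ^ 2 := by
          simp only [fourierMod_chainDist_mul hμ1, norm_prod, Finset.prod_pow]
      _ ≤ (1 + K * β ^ r) ^ t :=
          hK hpAN hpB (fun a => by positivity) (fun a => pow_le_one₀ (norm_nonneg _)
            (norm_fourierMod_le_one (chainDist_nonneg hμ0 N) (hasSum_chainDist hμ1 N) a))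
            hβ0.le (hβ p) hr ht
  linarith [four_mul_tvDist_sq_le (A := A) (p := p) hμ1 n, sq_nonneg (tvDist A μ p n)]

end Block

section Asymptotics

lemma natLog_two_le_two_mul_log (n : ℕ) : (Nat.log 2 n : ℝ) ≤ 2 * Real.log n := by
  have hlog2 := Real.log_two_gt_d9
  refine (Real.natLog_le_logb n 2).trans ?_
  rw [Real.logb, Nat.cast_ofNat, div_le_iff₀ (by linarith)]
  nlinarith [Real.log_natCast_nonneg n]

lemma natLog_mul_natLog_natLog_le {p : ℕ} (hp : 1 ≤ Real.log (Real.log p)) :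
    ((Nat.log 2 (Nat.log 2 p + 1) + 1 : ℕ) * (Nat.log 2 p + 1 : ℕ) : ℝ) ≤
      21 * (Real.log p * Real.log (Real.log p)) := by
  have hlog : 1 ≤ Real.log p := by
    by_contra! hlt
    linarith [Real.log_nonpos (Real.log_natCast_nonneg p) hlt.le]
  have ht : ((Nat.log 2 p + 1 : ℕ) : ℝ) ≤ 3 * Real.log p := by
    push_cast
    linarith [natLog_two_le_two_mul_log p]
  have hq : ((Nat.log 2 (Nat.log 2 p + 1) + 1 : ℕ) : ℝ) ≤ 7 * Real.log (Real.log p) := by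
    have hlogt := Real.log_le_log (by positivity) ht
    rw [Real.log_mul three_ne_zero (by positivity)] at hlogt
    have hlog3 := Real.log_le_sub_one_of_pos (three_pos (α := ℝ))
    rw [Nat.cast_add_one]
    linarith [natLog_two_le_two_mul_log (Nat.log 2 p + 1)]
  calc _ ≤ 7 * Real.log (Real.log p) * (3 * Real.log p) := by gcongr
    _ = 21 * (Real.log p * Real.log (Real.log p)) := by ring

lemma one_add_mul_pow_le_exp {K t : ℕ} {x : ℝ} (hx0 : 0 ≤ x) (hx : x ≤ 1 / (t : ℝ) ^ 2) :
    (1 + K * x) ^ t ≤ Real.exp (K / t) := by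
  calc (1 + K * x) ^ t ≤ Real.exp (K * x) ^ t := by
        gcongr
        linarith [Real.add_one_le_exp (K * x)]
    _ = Real.exp (t * (K * x)) := (Real.exp_nat_mul _ _).symm
    _ ≤ Real.exp (t * (K * (1 / (t : ℝ) ^ 2))) := by gcongr
    _ = Real.exp (K / t) := by
        congr 1
        field_simp

lemma pow_mul_natLog_succ_le {β : ℝ} (hβ0 : 0 ≤ β) {s : ℕ} (hs : β ^ s < 1 / 4) {t : ℕ}
    (ht : 0 < t) : β ^ (s * (Nat.log 2 t + 1)) ≤ 1 / (t : ℝ) ^ 2 := by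
  have hlt : (t : ℝ) ≤ 2 ^ (Nat.log 2 t + 1) := by
    exact_mod_cast (Nat.lt_pow_succ_log_self one_lt_two t).le
  calc β ^ (s * (Nat.log 2 t + 1)) ≤ (1 / 4) ^ (Nat.log 2 t + 1) := by
        rw [pow_mul]
        gcongr
    _ = 1 / (2 ^ (Nat.log 2 t + 1)) ^ 2 := by
        rw [← pow_mul, mul_comm _ 2, pow_mul, ← _root_.one_div_pow]
        norm_num
    _ ≤ 1 / (t : ℝ) ^ 2 := by gcongr

/-- The convergence rate `ε(p)`: the Fourier estimate where `1 ≤ log (log p)`, and the trivial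
bound `1` for the finitely many smaller `p`, where `c log p log (log p) ≤ n` may hold at `n = 0`. -/
def tvRate (K p : ℕ) : ℝ :=
  if 1 ≤ Real.log (Real.log p) then √(Real.exp (K / (Nat.log 2 p + 1 : ℕ)) - 1) else 1

lemma tendsto_tvRate (K : ℕ) : Filter.Tendsto (tvRate K) Filter.atTop (nhds 0) := by
  have hloglog : Filter.Tendsto (fun p : ℕ => Real.log (Real.log p)) Filter.atTop Filter.atTop :=
    Real.tendsto_log_atTop.comp (Real.tendsto_log_atTop.comp tendsto_natCast_atTop_atTop)
  have hnatLog : Filter.Tendsto (fun p => Nat.log 2 p + 1) Filter.atTop Filter.atTop :=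
    Filter.tendsto_atTop.2 fun b => by
      filter_upwards [Filter.eventually_ge_atTop (2 ^ b)] with p hp
      exact (Nat.le_log_of_pow_le one_lt_two hp).trans (Nat.le_succ _)
  have hexp := (Real.continuous_exp.tendsto 0).comp
    ((tendsto_const_div_atTop_nhds_zero_nat (K : ℝ)).comp hnatLog)
  have hsqrt := (hexp.sub_const 1).sqrt
  rw [Real.exp_zero, sub_self, Real.sqrt_zero] at hsqrt
  refine hsqrt.congr' ?_
  filter_upwards [hloglog.eventually_ge_atTop 1] with p hp
  rw [tvRate, if_pos hp]
  rfl

end Asymptotics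

theorem uniformity_ln_lnln_general {k : ℕ} {A : Matrix (Fin k) (Fin k) ℤ}
    (hA : ∀ z : ℂ, (A.map (Int.cast : ℤ → ℂ)).charpoly.IsRoot z → 1 < ‖z‖)
    {μ : (Fin k → ℤ) → ℝ} (hμ0 : ∀ x, 0 ≤ μ x) (hμ1 : HasSum μ 1)
    {y : Fin k → Fin k → ℤ} (hy : ∀ j, ∃ x ∈ Vset μ, ∃ m : ℕ, y j = (A ^ m) *ᵥ x) :
    ∃ (c : ℝ) (ε : ℕ → ℝ), 0 < c ∧ Filter.Tendsto ε Filter.atTop (nhds 0) ∧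
      ∀ p : ℕ, 0 < p → Int.gcd A.det p = 1 → Int.gcd (colMat y).det p = 1 →
        ∀ n : ℕ, c * Real.log p * Real.log (Real.log p) ≤ n → tvDist A μ p n ≤ ε p := by
  obtain ⟨N, K, β, hβ0, hβ1, hbound⟩ := exists_tvDist_sq_le hA hμ0 hμ1 hy
  obtain ⟨s, hs⟩ := exists_pow_lt_of_lt_one (by norm_num : (0 : ℝ) < 1 / 4) hβ1
  have hs0 : 0 < s := Nat.pos_of_ne_zero fun h => by norm_num [h] at hs
  refine ⟨21 * (N * s) + 1, tvRate K, by positivity, tendsto_tvRate K,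
    fun p hp hpA hpB n hn => ?_⟩
  unfold tvRate
  split_ifs with hlog
  · have hsteps : s * (Nat.log 2 (Nat.log 2 p + 1) + 1) * (Nat.log 2 p + 1) * N ≤ n := by
      have hlength := mul_le_mul_of_nonneg_left (natLog_mul_natLog_natLog_le hlog)
        (by positivity : (0 : ℝ) ≤ N * s)
      have hloglog := mul_nonneg (Real.log_natCast_nonneg p) (zero_le_one.trans hlog)
      exact_mod_cast (by push_cast at *; linarith :
        ((s * (Nat.log 2 (Nat.log 2 p + 1) + 1) * (Nat.log 2 p + 1) * N : ℕ) : ℝ) ≤ n)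
    refine Real.le_sqrt_of_sq_le ((hbound p hp hpA hpB n _ _ (Nat.mul_pos hs0 (Nat.succ_pos _))
      (Nat.lt_pow_succ_log_self one_lt_two p) hsteps).trans (sub_le_sub_right ?_ 1))
    exact one_add_mul_pow_le_exp (by positivity)
      (pow_mul_natLog_succ_le hβ0.le hs (Nat.succ_pos _))
  · have : NeZero p := ⟨hp.ne'⟩
    exact tvDist_le_one hμ0 hμ1 n

/-- **Theorem 3.4**: if every (complex) eigenvalue `λ` of `A` is nonzero and satisfies
`λ^l ∈ ℕ, λ^l ≥ 2` for some positive integer `l`, and the support of `μ` is not parallel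
to a proper subspace of `ℚ^k` invariant under `A`, then there is `c > 0` such that for all
`p` with `gcd(det A, p) = gcd(det B, p) = 1` and all `n ≥ c ln p ln ln p`,
`‖P_n − U‖ ≤ ε(p)` where `ε(p) → 0` as `p → ∞`. -/
theorem uniformity_ln_lnln (k : ℕ) (hk : 1 ≤ k)
    (A : Matrix (Fin k) (Fin k) ℤ) (hA : A.det ≠ 0)
    (hEig : ∀ lam : ℂ, (A.map (Int.cast : ℤ → ℂ)).charpoly.IsRoot lam →
      lam ≠ 0 ∧ ∃ l : ℕ, 0 < l ∧ ∃ m : ℕ, 2 ≤ m ∧ lam ^ l = (m : ℂ))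
    (μ : (Fin k → ℤ) → ℝ) (hμ0 : ∀ x, 0 ≤ μ x) (hμ1 : HasSum μ 1)
    (hpar : ¬ ParallelInv A μ)
    (y : Fin k → (Fin k → ℤ)) (hy : ∀ j, y j ∈ VdSet A μ)
    (hybasis : (colMat y).det ≠ 0) :
    ∃ (c : ℝ) (ε : ℕ → ℝ), 0 < c ∧ Filter.Tendsto ε Filter.atTop (nhds 0) ∧
      ∀ p : ℕ, 0 < p → Int.gcd A.det p = 1 → Int.gcd (colMat y).det p = 1 →
        ∀ n : ℕ, c * Real.log p * Real.log (Real.log p) ≤ n → tvDist A μ p n ≤ ε p := by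
  exact uniformity_ln_lnln_general (fun z hz =>
    have ⟨_, _, _, _, hm, hpow⟩ := hEig z hz; one_lt_norm_of_pow_eq_natCast hm hpow) hμ0 hμ1
    fun j => have ⟨x, hx, m, _, hyj⟩ := hy j; ⟨x, hx, m, hyj⟩
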